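/- arXiv:1412.3701 — 2 statements merged into one kernel-verified Lean document; each statement's English description precedes it below -/
import Mathlib

section
/- For every n > 1 let Σ_I = Σ_O = {1,…,n,#} and let L'_n ⊆ (Σ_I × Σ_O)^ω be defined by: for a word with first-component sequence α and second-component sequence β, set j = β(0) and α' = α(1)α(2)α(3)⋯; if j ∈ {1,…,n}, then the word is in L'_n iff either α' contains no # or α' contains a bad j-pair strictly before its first occurrence of #; if j = #, then the word is in L'_n iff at most one occurrence of the letter n appears in α' before its first occurrence of # (before the end of the word if no # occurs). Then (i) there is a constant c such that for every n > 1, L'_n = L_∀(A'_n) for a deterministic safety automaton A'_n with at most c·n states; (ii) Player O wins Γ_f(L'_n) for every constant delay function f with f(0) > 2^n; and (iii) Player I wins Γ_f(L'_n) for every delay function f with f(0) ≤ 2^n. -/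
/-!
A word of length `2 ^ k` over `k` letters contains a bad pair: its largest letter either occurs in
both halves, giving a bad pair, or is missing from one half, which has only `k - 1` letters. The
bound is sharp: the sequence of `2`-adic valuations of `1, 2, …, 2 ^ n - 1` has no bad pair, because
between two odd multiples of `2 ^ j` lies a multiple of `2 ^ (j + 1)`.

No letter is larger than `n`, so for `β(0) = #` the winning condition says that no bad `n`-pair
occurs before the first `#`. Both cases are thus decided by one scan of `α'` for a bad pair, which a
safety automaton performs with four phases for each value of `β(0)`.

Since `β` matters only through `β(0)`, the delay game is about a single move. Having seen `2 ^ n`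
letters of `α'`, Player O names a letter whose bad pair is already visible before any `#`. If there
is none, then a `#` is visible, no bad pair precedes it, and she answers `#`. If he must reveal
fewer letters, Player I opens with the sequence of valuations, and continues with `#` forever
against a letter and with the letter `n` forever against `#`.
-/

namespace DelayGames

/-- A delay function: positive in every round. -/
def IsDelay (f : ℕ → ℕ) : Prop := ∀ i, 1 ≤ f i

/-- A constant delay function: `f i = 1` for all `i > 0`. -/
def IsConstant (f : ℕ → ℕ) : Prop := ∀ i, 0 < i → f i = 1

section Games

variable {I O : Type*}

/-- `α` is the ω-word obtained by concatenating the blocks `u 0, u 1, u 2, …`: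
every finite concatenation of initial blocks is a prefix of `α`. -/
def IsCat (u : ℕ → List I) (α : ℕ → I) : Prop :=
  ∀ i, ((List.range i).map u).flatten =
    (List.range (((List.range i).map u).flatten.length)).map α

/-- The blocks of Player I have the lengths prescribed by the delay function. -/
def ValidBlocks (f : ℕ → ℕ) (u : ℕ → List I) : Prop := ∀ i, (u i).length = f i

/-- The play `(u, v)` is consistent with the strategy `τ` of Player O:
in every round, `v i` is prescribed by `τ` applied to `u 0 ⋯ u i`. -/
def ConsistentO (τ : List I → O) (u : ℕ → List I) (v : ℕ → O) : Prop :=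
  ∀ i, v i = τ (((List.range (i + 1)).map u).flatten)

/-- The play `(u, v)` is consistent with the strategy `τ` of Player I:
in every round, `u i` is prescribed by `τ` applied to `v 0 ⋯ v (i-1)`. -/
def ConsistentI (τ : List O → List I) (u : ℕ → List I) (v : ℕ → O) : Prop :=
  ∀ i, u i = τ ((List.range i).map v)

/-- Player O wins the delay game `Γ_f(L)`: she has a strategy such that every
consistent play (against blocks of the prescribed lengths) has its outcome in `L`. -/
def WinsO (f : ℕ → ℕ) (L : Set (ℕ → I × O)) : Prop :=
  ∃ τ : List I → O, ∀ u v α, ValidBlocks f u → ConsistentO τ u v → IsCat u α →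
    (fun n => (α n, v n)) ∈ L

/-- Player I wins the delay game `Γ_f(L)`: he has a strategy respecting the
lengths prescribed by `f` such that no consistent play has its outcome in `L`. -/
def WinsI (f : ℕ → ℕ) (L : Set (ℕ → I × O)) : Prop :=
  ∃ τ : List O → List I, (∀ w, (τ w).length = f w.length) ∧
    ∀ u v α, ConsistentI τ u v → IsCat u α → (fun n => (α n, v n)) ∉ L

/-- Projection of a winning condition to the first components. -/
def projL (L : Set (ℕ → I × O)) : Set (ℕ → I) :=
  {α | ∃ β : ℕ → O, (fun n => (α n, β n)) ∈ L}

end Games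

/-- The prefix of length `k` of an ω-word. -/
def pre {A : Type*} (x : ℕ → A) (k : ℕ) : List A := (List.range k).map x

/-- `K · A^ω`: the ω-words having a finite prefix in `K`. -/
def extOmega {A : Type*} (K : Set (List A)) : Set (ℕ → A) := {x | ∃ k, pre x k ∈ K}

/-- Nondeterministic automata with a complete transition function. -/
structure NA (Q A : Type*) where
  init : Q
  trans : Q → A → Set Q
  accept : Set Q
  complete : ∀ q a, (trans q a).Nonempty

namespace NA

variable {Q A : Type*} (M : NA Q A)

/-- The automaton is deterministic. -/
def Deterministic : Prop := ∀ q a, ∃ q', M.trans q a = {q'}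

/-- The states reachable from a set of states after reading a finite word. -/
def reach (S : Set Q) (w : List A) : Set Q :=
  w.foldl (fun T a => ⋃ q ∈ T, M.trans q a) S

/-- The finite words accepted by `M` (runs from the initial state ending in `accept`). -/
def Lstar : Set (List A) := {w | (M.reach {M.init} w ∩ M.accept).Nonempty}

/-- `ρ` is a run of `M` on the ω-word `x`. -/
def IsRun (x : ℕ → A) (ρ : ℕ → Q) : Prop :=
  ρ 0 = M.init ∧ ∀ n, ρ (n + 1) ∈ M.trans (ρ n) (x n)

/-- Reachability acceptance: some run visits an accepting state at least once. -/
def Lexists : Set (ℕ → A) := {x | ∃ ρ, M.IsRun x ρ ∧ ∃ n, ρ n ∈ M.accept}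

/-- Safety acceptance: some run visits only accepting states. -/
def Lforall : Set (ℕ → A) := {x | ∃ ρ, M.IsRun x ρ ∧ ∀ n, ρ n ∈ M.accept}

/-- A state is productive if an accepting state is reachable from it. -/
def Productive (q : Q) : Prop := ∃ w, (M.reach {q} w ∩ M.accept).Nonempty

/-- A state lies on a cycle. -/
def OnCycle (q : Q) : Prop := ∃ w : List A, w ≠ [] ∧ q ∈ M.reach {q} w

/-- An automaton is acyclic if every state on a cycle is non-productive. -/
def Acyclic : Prop := ∀ q, M.OnCycle q → ¬ M.Productive q

/-- A state is reachable from the initial state. -/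
def ReachableState (q : Q) : Prop := ∃ w, q ∈ M.reach {M.init} w

/-- `k` is the depth of the (acyclic) automaton `M`: the length of a longest
path from the initial state to an accepting state. -/
def HasDepth (k : ℕ) : Prop :=
  (∀ w ∈ M.Lstar, w.length ≤ k) ∧ ∃ w ∈ M.Lstar, w.length = k

end NA

/-- Projection of an automaton over `I × O` to the alphabet `I`. -/
def NA.projI {Q I O : Type*} [Nonempty O] (M : NA Q (I × O)) : NA Q I where
  init := M.init
  trans q a := ⋃ b : O, M.trans q (a, b)
  accept := M.accept
  complete q a := by
    obtain ⟨b⟩ := ‹Nonempty O›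
    obtain ⟨q', hq'⟩ := M.complete q (a, b)
    exact ⟨q', Set.mem_iUnion.2 ⟨b, hq'⟩⟩

/-- Deterministic parity automata. -/
structure DPA (Q A : Type*) where
  init : Q
  trans : Q → A → Q
  color : Q → ℕ

/-- The maximal value occurring infinitely often in the sequence `c` exists
and is even. -/
def MaxEvenInf (c : ℕ → ℕ) : Prop :=
  ∃ k, Even k ∧ {n | c n = k}.Infinite ∧ ∀ k', {n | c n = k'}.Infinite → k' ≤ k

/-- Deterministic finite automata (acceptors for finite words). -/
structure DFAcc (S A : Type*) where
  init : S
  trans : S → A → S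
  accept : Set S

/-- The language of finite words accepted by a DFA. -/
def DFAcc.lang {S A : Type*} (D : DFAcc S A) : Set (List A) :=
  {w | w.foldl D.trans D.init ∈ D.accept}

namespace DPA

variable {Q A : Type*} (M : DPA Q A)

/-- The unique run of a deterministic automaton on an ω-word. -/
def run (x : ℕ → A) : ℕ → Q
  | 0 => M.init
  | n + 1 => M.trans (run x n) (x n)

/-- The parity language of `M`: the maximal color visited infinitely often is even. -/
def Lparity : Set (ℕ → A) := {x | MaxEvenInf fun n => M.color (M.run x n)}

/-- The number of colors of `M`. -/
def numColors [Fintype Q] : ℕ := (Finset.image M.color Finset.univ).card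

end DPA

namespace DPA

variable {Q I O : Type*} (M : DPA Q (I × O))

/-- The transition function of the color-tracking automaton `𝒞`. -/
def transC (qc : Q × ℕ) (x : I × O) : Q × ℕ :=
  (M.trans qc.1 x, max qc.2 (M.color (M.trans qc.1 x)))

/-- The initial state of the color-tracking automaton `𝒞`. -/
def initC : Q × ℕ := (M.init, M.color M.init)

/-- The valid states of `𝒞`, i.e. `Q × Ω(Q)`. -/
def QCvalid : Set (Q × ℕ) := {qc | qc.2 ∈ Set.range M.color}

/-- One step of the powerset automaton of the projection of `𝒞`. -/
def transP (S : Set (Q × ℕ)) (a : I) : Set (Q × ℕ) :=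
  ⋃ s ∈ S, ⋃ b : O, {M.transC s (a, b)}

/-- Iterated powerset transitions `δ_P^*`. -/
def transPStar (S : Set (Q × ℕ)) (w : List I) : Set (Q × ℕ) :=
  w.foldl M.transP S

/-- The domain of a partial function, represented via `Option`. -/
def rdom {Q : Type*} (r : (Q × ℕ) → Option (Set (Q × ℕ))) : Set (Q × ℕ) :=
  {qc | r qc ≠ none}

open scoped Classical in
/-- The partial function `r_w^D` with domain `D`. -/
noncomputable def rOf (D : Set (Q × ℕ)) (w : List I) :
    (Q × ℕ) → Option (Set (Q × ℕ)) :=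
  fun qc =>
    if qc ∈ D then some (M.transPStar ({(qc.1, M.color qc.1)} : Set (Q × ℕ)) w)
    else none

/-- The set `W_r` of witnesses of a partial function `r`. -/
def WitnessSet (r : (Q × ℕ) → Option (Set (Q × ℕ))) : Set (List I) :=
  {w | r = M.rOf (rdom r) w}

/-- The set `𝔉` of partial functions with nonempty domain and infinitely many
witnesses. -/
def Frak : Set ((Q × ℕ) → Option (Set (Q × ℕ))) :=
  {r | (rdom r).Nonempty ∧ (M.WitnessSet r).Infinite}

end DPA

end DelayGames

namespace DelayGames

/-- Membership in the winning condition `L'_n` over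
`Σ_I = Σ_O = {1, …, n, #}`, where the letter `k ∈ {1, …, n}` is represented by
`some k` (with `k : Fin n`, so `some v` represents the letter `v + 1`) and `#`
by `none`.  With `j = β(0)` and `α' = α(1)α(2)α(3)⋯`: if `j ∈ {1, …, n}`, the
word is in `L'_n` iff `α'` contains no `#` or `α'` contains a bad `j`-pair
strictly before its first `#`; if `j = #`, the word is in `L'_n` iff at most
one occurrence of the letter `n` appears in `α'` before its first `#`. -/
def memLsafe (n : ℕ) (x : ℕ → Option (Fin n) × Option (Fin n)) : Prop :=
  match (x 0).2 with
  | some j =>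
      (∀ k, (x (k + 1)).1 ≠ none) ∨
      ∃ i₁ i₂, i₁ < i₂ ∧ (x (i₁ + 1)).1 = some j ∧ (x (i₂ + 1)).1 = some j ∧
        (∀ i, i₁ < i → i < i₂ → ∀ v : Fin n, (x (i + 1)).1 = some v → v ≤ j) ∧
        (∀ i, i ≤ i₂ → (x (i + 1)).1 ≠ none)
  | none =>
      ∀ i₁ i₂,
        ((∀ k, k ≤ i₁ → (x (k + 1)).1 ≠ none) ∧
          ∃ v : Fin n, (x (i₁ + 1)).1 = some v ∧ (v : ℕ) + 1 = n) →
        ((∀ k, k ≤ i₂ → (x (k + 1)).1 ≠ none) ∧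
          ∃ v : Fin n, (x (i₂ + 1)).1 = some v ∧ (v : ℕ) + 1 = n) →
        i₁ = i₂

/-- The winning condition `L'_n`. -/
def Lsafe (n : ℕ) : Set (ℕ → Option (Fin n) × Option (Fin n)) :=
  {x | memLsafe n x}

section Games

variable {I O : Type*}

theorem pre_succ {A : Type*} (x : ℕ → A) (k : ℕ) : pre x (k + 1) = pre x k ++ [x k] := by
  simp [pre, List.range_succ]

theorem length_pre {A : Type*} (x : ℕ → A) (k : ℕ) : (pre x k).length = k := by
  simp [pre]

theorem pre_eq_pre_iff {A : Type*} {x y : ℕ → A} {k : ℕ} :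
    pre x k = pre y k ↔ ∀ i < k, x i = y i := by
  simp [pre, List.map_inj_left]

theorem le_length_flatten_map_range {u : ℕ → List I} (hu : ∀ i, u i ≠ []) (k : ℕ) :
    k ≤ ((List.range k).map u).flatten.length := by
  induction k with
  | zero => exact Nat.zero_le _
  | succ k ih =>
    have := List.length_pos_iff.2 (hu k)
    simp only [List.range_succ, List.map_append, List.map_singleton, List.flatten_append,
      List.flatten_singleton, List.length_append]
    omega

theorem IsCat.unique {u : ℕ → List I} (hu : ∀ i, u i ≠ []) {α β : ℕ → I} (hα : IsCat u α)
    (hβ : IsCat u β) : α = β := by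
  funext k
  exact pre_eq_pre_iff.1 ((hα (k + 1)).symm.trans (hβ (k + 1))) k
    (le_length_flatten_map_range hu (k + 1))

/-- The `i`-th block of `α` when `α` is cut into consecutive blocks of lengths `f 0, f 1, …`. -/
def block (f : ℕ → ℕ) (α : ℕ → I) (i : ℕ) : List I :=
  pre (fun k => α (∑ j ∈ Finset.range i, f j + k)) (f i)

theorem length_block (f : ℕ → ℕ) (α : ℕ → I) (i : ℕ) : (block f α i).length = f i :=
  length_pre _ _

theorem block_zero (f : ℕ → ℕ) (α : ℕ → I) : block f α 0 = pre α (f 0) := by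
  simp [block]

theorem flatten_map_block (f : ℕ → ℕ) (α : ℕ → I) (i : ℕ) :
    ((List.range i).map (block f α)).flatten = pre α (∑ j ∈ Finset.range i, f j) := by
  induction i with
  | zero => rfl
  | succ i ih =>
    simp [List.range_succ, Finset.sum_range_succ, ih, block, pre, List.range_add]

theorem isCat_block (f : ℕ → ℕ) (α : ℕ → I) : IsCat (block f α) α := by
  intro i
  rw [flatten_map_block, length_pre, pre]

variable {f : ℕ → ℕ} {L : Set (ℕ → I × O)}

theorem winsO_of_first_letter
    (h : ∀ w : List I, ∃ b : O, ∀ α, pre α (f 0) = w →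
      ∀ β : ℕ → O, β 0 = b → (fun n => (α n, β n)) ∈ L) :
    WinsO f L := by
  choose τ hτ using h
  refine ⟨τ, fun u v α hu hv hα => hτ (u 0) α ?_ v (by simpa using hv 0)⟩
  simpa [pre, hu 0] using (hα 1).symm

theorem winsI_of_first_block (hf : IsDelay f) (p : ℕ → I)
    (h : ∀ b : O, ∃ α, pre α (f 0) = pre p (f 0) ∧
      ∀ β : ℕ → O, β 0 = b → (fun n => (α n, β n)) ∉ L) :
    WinsI f L := by
  choose x hx hL using h
  let τ : List O → List I
    | [] => pre p (f 0)
    | b :: w => block f (x b) (w.length + 1)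
  refine ⟨τ, fun w => ?_, fun u v α hu hα => ?_⟩
  · cases w with
    | nil => exact length_pre _ _
    | cons b w => exact length_block _ _ _
  · have hblock : u = block f (x (v 0)) := by
      funext i
      rw [hu i]
      cases i with
      | zero => exact (hx (v 0)).symm.trans (block_zero _ _).symm
      | succ i => simp [List.range_succ_eq_map, τ]
    have hne i : u i ≠ [] := by
      rw [← List.length_pos_iff, hblock, length_block]
      exact hf i
    rw [hα.unique hne (hblock ▸ isCat_block f (x (v 0)))]
    exact hL (v 0) v rfl

end Games

section BadPairs

variable {A : Type*} [LinearOrder A]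

/-- The letter `j` occurs before position `m`, with no larger letter in between, so that another
`j` at position `m` would complete a bad `j`-pair. -/
def Pending (a : ℕ → Option A) (j : A) (m : ℕ) : Prop :=
  ∃ i < m, a i = some j ∧ ∀ k, i < k → k < m → ∀ v, a k = some v → v ≤ j

/-- Position `m` is the second position of a bad `j`-pair, and no `#` occurs up to there. -/
def BadPairAt (a : ℕ → Option A) (j : A) (m : ℕ) : Prop :=
  Pending a j m ∧ a m = some j ∧ ∀ i ≤ m, a i ≠ none

/-- The ω-word `a` contains a bad `j`-pair strictly before its first `#`. -/
def HasBadPair (a : ℕ → Option A) (j : A) : Prop := ∃ m, BadPairAt a j m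

variable {a b : ℕ → Option A} {j : A} {m : ℕ}

theorem pending_succ :
    Pending a j (m + 1) ↔ a m = some j ∨ Pending a j m ∧ ∀ v, a m = some v → v ≤ j := by
  constructor
  · rintro ⟨i, him, hij, hle⟩
    obtain him | rfl := Nat.lt_succ_iff_lt_or_eq.1 him
    · exact .inr ⟨⟨i, him, hij, fun k hik hkm => hle k hik (by omega)⟩, hle m him (by omega)⟩
    · exact .inl hij
  · rintro (hj | ⟨⟨i, him, hij, hle⟩, hm⟩)
    · exact ⟨m, by omega, hj, fun k _ _ => by omega⟩
    · refine ⟨i, by omega, hij, fun k hik hkm => ?_⟩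
      obtain hkm | rfl := Nat.lt_succ_iff_lt_or_eq.1 hkm
      exacts [hle k hik hkm, hm]

theorem BadPairAt.congr (h : BadPairAt a j m) (hab : ∀ i ≤ m, a i = b i) : BadPairAt b j m := by
  obtain ⟨⟨i, him, hij, hle⟩, hm, hfree⟩ := h
  refine ⟨⟨i, him, hab i him.le ▸ hij, fun k hik hkm => hab k hkm.le ▸ hle k hik hkm⟩,
    hab m le_rfl ▸ hm, fun k hk => hab k hk ▸ hfree k hk⟩

theorem exists_pending_of_forall_mem (s : Finset A) :
    ∀ t, (∀ i, t ≤ i → i < t + 2 ^ s.card → ∃ v ∈ s, a i = some v) →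
      ∃ j, ∃ m < t + 2 ^ s.card, Pending a j m ∧ a m = some j := by
  induction s using Finset.induction_on_max with
  | empty =>
    intro t h
    obtain ⟨v, hv, -⟩ := h t le_rfl (by simp)
    simp at hv
  | insert M s hM ih =>
    intro t h
    rw [Finset.card_insert_of_notMem fun hMs => (hM M hMs).false, pow_succ, mul_two,
      ← add_assoc] at h ⊢
    have avoid {i} (hti : t ≤ i) (hi : i < t + 2 ^ s.card + 2 ^ s.card) (hne : a i ≠ some M) :
        ∃ v ∈ s, a i = some v := by
      obtain ⟨v, hv, hiv⟩ := h i hti hi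
      exact ⟨v, (Finset.mem_insert.1 hv).resolve_left fun hvM => hne (hvM ▸ hiv), hiv⟩
    by_cases hfst : ∀ i, t ≤ i → i < t + 2 ^ s.card → a i ≠ some M
    · obtain ⟨j, m, hm, hpair⟩ := ih t fun i hti hi => avoid hti (by omega) (hfst i hti hi)
      exact ⟨j, m, hm.trans_le (Nat.le_add_right _ _), hpair⟩
    by_cases hsnd : ∀ i, t + 2 ^ s.card ≤ i → i < t + 2 ^ s.card + 2 ^ s.card → a i ≠ some M
    · exact ih (t + 2 ^ s.card) fun i hti hi => avoid (by omega) hi (hsnd i hti hi)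
    push Not at hfst hsnd
    obtain ⟨p, htp, hp, hpM⟩ := hfst
    obtain ⟨q, htq, hq, hqM⟩ := hsnd
    refine ⟨M, q, hq, ⟨p, by omega, hpM, fun k hpk hkq v hv => ?_⟩, hqM⟩
    obtain ⟨w, hw, hkw⟩ := h k (by omega) (by omega)
    obtain rfl : w = v := Option.some.inj (hkw.symm.trans hv)
    obtain rfl | hws := Finset.mem_insert.1 hw
    exacts [le_rfl, (hM w hws).le]

theorem exists_badPairAt_of_ne_none [Fintype A] (h : ∀ i < 2 ^ Fintype.card A, a i ≠ none) :
    ∃ j, ∃ m < 2 ^ Fintype.card A, BadPairAt a j m := by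
  obtain ⟨j, m, hm, hpending, hj⟩ := exists_pending_of_forall_mem (a := a) Finset.univ 0
    fun i _ hi => by
      obtain ⟨v, hv⟩ := Option.ne_none_iff_exists'.1 (h i (by simpa using hi))
      exact ⟨v, Finset.mem_univ v, hv⟩
  rw [zero_add, Finset.card_univ] at hm
  exact ⟨j, m, hm, hpending, hj, fun i hi => h i (by omega)⟩

end BadPairs

section WinningCondition

variable {n : ℕ} {x : ℕ → Option (Fin n) × Option (Fin n)}

theorem mem_Lsafe_of_eq_some {j : Fin n} (h : (x 0).2 = some j) :
    x ∈ Lsafe n ↔ (∀ k, (x (k + 1)).1 ≠ none) ∨ HasBadPair (fun k => (x (k + 1)).1) j := by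
  simp only [Lsafe, Set.mem_ofPred_eq, memLsafe, h, HasBadPair, BadPairAt, Pending]
  refine or_congr_right ⟨?_, ?_⟩
  · rintro ⟨i, m, him, hi, hm, hle, hfree⟩
    exact ⟨m, ⟨i, him, hi, hle⟩, hm, hfree⟩
  · rintro ⟨m, ⟨i, him, hi, hle⟩, hm, hfree⟩
    exact ⟨i, m, him, hi, hm, hle, hfree⟩

theorem mem_Lsafe_of_eq_none [NeZero n] (h : (x 0).2 = none) :
    x ∈ Lsafe n ↔ ¬ HasBadPair (fun k => (x (k + 1)).1) ⊤ := by
  have hn := NeZero.pos n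
  have eq_top (v : Fin n) : (v : ℕ) + 1 = n ↔ v = ⊤ := by
    rw [Fin.ext_iff, Fin.val_top]
    omega
  simp only [Lsafe, Set.mem_ofPred_eq, memLsafe, h, eq_top, exists_eq_right]
  constructor
  · rintro hunique ⟨m, ⟨i, him, hi, -⟩, hm, hfree⟩
    exact him.ne (hunique i m ⟨fun k hk => hfree k (by omega), hi⟩ ⟨hfree, hm⟩)
  · rintro hbad i₁ i₂ ⟨hfree₁, h₁⟩ ⟨hfree₂, h₂⟩
    by_contra! hne
    obtain hlt | hlt := hne.lt_or_gt
    · exact hbad ⟨i₂, ⟨i₁, hlt, h₁, fun _ _ _ _ _ => le_top⟩, h₂, hfree₂⟩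
    · exact hbad ⟨i₁, ⟨i₂, hlt, h₂, fun _ _ _ _ _ => le_top⟩, h₁, hfree₁⟩

end WinningCondition

section Automaton

variable {A Q : Type*}

/-- A Mathlib `DFA`, which has a transition function, as an automaton whose transition function is
set-valued. -/
def NA.ofDFA (M : DFA A Q) : NA Q A where
  init := M.start
  trans q a := {M.step q a}
  accept := M.accept
  complete _ _ := Set.singleton_nonempty _

theorem NA.deterministic_ofDFA (M : DFA A Q) : (NA.ofDFA M).Deterministic :=
  fun _ _ => ⟨_, rfl⟩

theorem NA.mem_Lforall_ofDFA {M : DFA A Q} {x : ℕ → A} :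
    x ∈ (NA.ofDFA M).Lforall ↔ ∀ k, pre x k ∈ M.accepts := by
  have eval_succ k : M.eval (pre x (k + 1)) = M.step (M.eval (pre x k)) (x k) := by
    rw [pre_succ, DFA.eval_append_singleton]
  constructor
  · rintro ⟨ρ, ⟨hinit, hstep⟩, haccept⟩ k
    have hρ : ρ k = M.eval (pre x k) := by
      induction k with
      | zero => exact hinit
      | succ k ih => rw [eval_succ, ← ih]; exact hstep k
    exact M.mem_accepts.2 (hρ ▸ haccept k)
  · exact fun h => ⟨fun k => M.eval (pre x k), ⟨rfl, eval_succ⟩, h⟩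

/-- What a scan of a word for a bad `j`-pair knows so far: no pair and no `#` yet, and a further
`j` would not (`idle`) or would (`armed`) complete a pair; a pair was `found` before any `#`; or
the part before the first `#` has `ended` without a pair. -/
inductive Phase
  | idle
  | armed
  | found
  | ended

instance : Fintype Phase where
  elems := ⟨([.idle, .armed, .found, .ended] : List Phase), by simp⟩
  complete q := by cases q <;> simp

theorem Phase.card_eq_four : Fintype.card Phase = 4 := rfl

variable [LinearOrder A]

/-- The effect of one further letter on the scan for a bad `j`-pair. -/
def Phase.step (j : A) : Phase → Option A → Phase
  | idle, none => ended
  | idle, some v => if v = j then armed else idle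
  | armed, none => ended
  | armed, some v => if v = j then found else if v ≤ j then armed else idle
  | found, _ => found
  | ended, _ => ended

open Classical in
/-- The outcome of scanning the first `m` letters of `a` for a bad `j`-pair. -/
noncomputable def phaseAt (a : ℕ → Option A) (j : A) (m : ℕ) : Phase :=
  if ∃ i < m, BadPairAt a j i then .found
  else if ∃ i < m, a i = none then .ended
  else if Pending a j m then .armed
  else .idle

variable {a : ℕ → Option A} {j : A} {m : ℕ}

theorem phaseAt_zero : phaseAt a j 0 = .idle := by
  simp [phaseAt, Pending]

theorem phaseAt_succ : phaseAt a j (m + 1) = (phaseAt a j m).step j (a m) := by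
  classical
  simp only [phaseAt, Nat.exists_lt_succ_right, pending_succ]
  by_cases hfound : ∃ i < m, BadPairAt a j i
  · simp only [hfound, true_or, if_true, Phase.step]
  by_cases hended : ∃ i < m, a i = none
  · have hnew : ¬ BadPairAt a j m := fun hbad =>
      let ⟨i, him, hi⟩ := hended
      hbad.2.2 i him.le hi
    simp only [hfound, hended, hnew, or_false, true_or, if_true, if_false, Phase.step]
  have hnew : BadPairAt a j m ↔ Pending a j m ∧ a m = some j := by
    refine ⟨fun hbad => ⟨hbad.1, hbad.2.1⟩, fun ⟨hpending, hj⟩ => ⟨hpending, hj, fun i hi => ?_⟩⟩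
    obtain him | rfl := hi.lt_or_eq
    exacts [fun hi => hended ⟨i, him, hi⟩, by simp [hj]]
  simp only [hfound, hended, hnew, false_or, if_false]
  by_cases hpending : Pending a j m <;> cases h : a m <;> grind [Phase.step]

theorem exists_phaseAt_eq_found : (∃ m, phaseAt a j m = .found) ↔ HasBadPair a j := by
  have phaseAt_eq_found m : phaseAt a j m = .found ↔ ∃ i < m, BadPairAt a j i := by
    unfold phaseAt
    split_ifs <;> simp_all
  simp only [phaseAt_eq_found]
  exact ⟨fun ⟨_, i, _, hi⟩ => ⟨i, hi⟩, fun ⟨i, hi⟩ => ⟨i + 1, i, i.lt_succ_self, hi⟩⟩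

theorem exists_phaseAt_eq_ended :
    (∃ m, phaseAt a j m = .ended) ↔ (∃ k, a k = none) ∧ ¬ HasBadPair a j := by
  have phaseAt_eq_ended m : phaseAt a j m = .ended ↔
      (∃ i < m, a i = none) ∧ ¬ ∃ i < m, BadPairAt a j i := by
    unfold phaseAt
    split_ifs <;> simp_all
  simp only [phaseAt_eq_ended]
  constructor
  · rintro ⟨m, ⟨k, hkm, hk⟩, hbad⟩
    refine ⟨⟨k, hk⟩, fun ⟨i, hi⟩ => ?_⟩
    obtain him | hmi := lt_or_ge i m
    exacts [hbad ⟨i, him, hi⟩, hi.2.2 k (by omega) hk]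
  · rintro ⟨⟨k, hk⟩, hbad⟩
    exact ⟨k + 1, ⟨k, k.lt_succ_self, hk⟩, fun ⟨i, _, hi⟩ => hbad ⟨i, hi⟩⟩

/-- The phase that refutes membership in the winning condition when Player O starts with the given
letter; for `#` the scan is for the largest letter. -/
def losingPhase : Option A → Phase
  | none => .found
  | some _ => .ended

variable [OrderTop A]

variable (A) in
/-- The safety automaton for `L'_n`. State `none` is initial; afterwards the state consists of the
first output letter and the phase of the scan. -/
def safeDFA : DFA (Option A × Option A) (Option (Option A × Phase)) where
  step
    | none, x => some (x.2, .idle)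
    | some (b, q), x => some (b, q.step (b.getD ⊤) x.1)
  start := none
  accept := {s | ∀ b, s ≠ some (b, losingPhase b)}

theorem eval_safeDFA_pre_succ (x : ℕ → Option A × Option A) (m : ℕ) :
    (safeDFA A).eval (pre x (m + 1)) =
      some ((x 0).2, phaseAt (fun k => (x (k + 1)).1) ((x 0).2.getD ⊤) m) := by
  induction m with
  | zero => rw [phaseAt_zero]; rfl
  | succ m ih => rw [pre_succ, DFA.eval_append_singleton, ih, phaseAt_succ]; rfl

theorem Lforall_ofDFA_safeDFA (n : ℕ) [NeZero n] :
    (NA.ofDFA (safeDFA (Fin n))).Lforall = Lsafe n := by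
  ext x
  have hinit : pre x 0 ∈ (safeDFA (Fin n)).accepts := fun _ => nofun
  have hsucc m : pre x (m + 1) ∈ (safeDFA (Fin n)).accepts ↔
      phaseAt (fun k => (x (k + 1)).1) ((x 0).2.getD ⊤) m ≠ losingPhase (x 0).2 := by
    rw [DFA.mem_accepts, eval_safeDFA_pre_succ]
    simp [safeDFA]
  rw [NA.mem_Lforall_ofDFA, ← Nat.and_forall_add_one, and_iff_right hinit]
  simp only [hsucc, ne_eq, ← not_exists]
  cases h : (x 0).2 with
  | none => rw [mem_Lsafe_of_eq_none h]; exact not_congr exists_phaseAt_eq_found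
  | some j =>
    rw [mem_Lsafe_of_eq_some h]
    simp [losingPhase, exists_phaseAt_eq_ended, imp_iff_not_or]

end Automaton

section Ruler

theorem exists_padicValNat_two_lt_of_eq {p q : ℕ} (hp : p ≠ 0) (hpq : p < q)
    (h : padicValNat 2 p = padicValNat 2 q) :
    ∃ m, p < m ∧ m < q ∧ padicValNat 2 p < padicValNat 2 m := by
  have val_two_pow_mul (k : ℕ) {b : ℕ} (hb : Odd b) : padicValNat 2 (2 ^ k * b) = k := by
    rw [padicValNat_base_pow_mul one_lt_two hb.pos.ne',
      padicValNat.eq_zero_of_not_dvd hb.not_two_dvd_nat, zero_add]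
  obtain ⟨k, b, hb, rfl⟩ := Nat.exists_eq_two_pow_mul_odd hp
  obtain ⟨l, c, hc, rfl⟩ := Nat.exists_eq_two_pow_mul_odd hpq.ne_bot
  obtain rfl : k = l := by rwa [val_two_pow_mul k hb, val_two_pow_mul l hc] at h
  have hbc : b < c := lt_of_mul_lt_mul_left hpq (Nat.zero_le _)
  have hbc' : b + 1 < c := by
    rw [Nat.odd_iff] at hb hc
    omega
  have heven : 1 ≤ padicValNat 2 (b + 1) :=
    one_le_padicValNat_of_dvd (by omega) hb.add_one.two_dvd
  refine ⟨2 ^ k * (b + 1), by gcongr; exact b.lt_succ_self, by gcongr, ?_⟩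
  rw [val_two_pow_mul k hb, padicValNat_base_pow_mul one_lt_two (by omega)]
  omega

variable {n : ℕ} [NeZero n] {m : ℕ}

/-- The word whose letter at each position `0 < i < m` with `i < 2 ^ n` is the exponent of `2`
in `i`, continued by `c` forever from position `m` on. The reduction modulo `n` in `Fin.ofNat` only
affects position `0` and positions from `2 ^ n` on. -/
def rulerWord (m : ℕ) (c : Option (Fin n)) (i : ℕ) : Option (Fin n) :=
  if i < m then some (Fin.ofNat n (padicValNat 2 i)) else c

theorem val_ofNat_padicValNat {i : ℕ} (hi : i ≠ 0) (hin : i < 2 ^ n) :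
    (Fin.ofNat n (padicValNat 2 i) : ℕ) = padicValNat 2 i := by
  rw [Fin.val_ofNat, Nat.mod_eq_of_lt]
  exact (padicValNat_le_nat_log i).trans_lt (Nat.log_lt_of_lt_pow hi hin)

theorem not_hasBadPair_rulerWord_none (h0 : 0 < m) (hm : m ≤ 2 ^ n) (j : Fin n) :
    ¬ HasBadPair (fun k => rulerWord m none (k + 1)) j := by
  rintro ⟨q, ⟨p, hpq, hp, hle⟩, hq, hfree⟩
  have hqm : q + 1 < m := by
    by_contra hmq
    exact hfree (m - 1) (by omega) (by simp [rulerWord, Nat.sub_add_cancel h0])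
  have letter {i} (hi : i ≤ q) :
      ∃ v : Fin n, rulerWord m none (i + 1) = some v ∧ (v : ℕ) = padicValNat 2 (i + 1) :=
    ⟨_, if_pos (by omega), val_ofNat_padicValNat i.succ_ne_zero (by omega)⟩
  have hval {i} (hi : i ≤ q) {v : Fin n} (hv : rulerWord m none (i + 1) = some v) :
      (v : ℕ) = padicValNat 2 (i + 1) := by
    obtain ⟨w, hw, hwval⟩ := letter hi
    rwa [Option.some.inj (hv.symm.trans hw)]
  obtain ⟨k, hpk, hkq, hlt⟩ := exists_padicValNat_two_lt_of_eq (p := p + 1) (by omega)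
    (Nat.succ_lt_succ hpq) ((hval hpq.le hp).symm.trans (hval le_rfl hq))
  obtain ⟨k, rfl⟩ := Nat.exists_eq_add_one.2 (show 0 < k by omega)
  obtain ⟨v, hv, hvval⟩ := letter (i := k) (by omega)
  have hvj := Fin.le_def.1 (hle k (by omega) (by omega) v hv)
  have := hval hpq.le hp
  omega

theorem hasBadPair_rulerWord_top (h0 : 0 < m) :
    HasBadPair (fun k => rulerWord m (some (⊤ : Fin n)) (k + 1)) ⊤ := by
  refine ⟨m, ⟨m - 1, by omega, ?_, fun _ _ _ _ _ => le_top⟩, ?_, fun i _ => ?_⟩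
  · simp [rulerWord, Nat.sub_add_cancel h0]
  · simp [rulerWord]
  · simp only [rulerWord]
    split_ifs <;> simp

end Ruler

section DelayGameOfLsafe

variable {n : ℕ} [NeZero n] {f : ℕ → ℕ}

theorem winsO_Lsafe (hf : 2 ^ n < f 0) : WinsO f (Lsafe n) := by
  refine winsO_of_first_letter fun w => ?_
  by_cases hforced : ∃ j, ∀ α : ℕ → Option (Fin n), pre α (f 0) = w →
      HasBadPair (fun k => α (k + 1)) j
  · obtain ⟨j, hj⟩ := hforced
    exact ⟨some j, fun α hα β hβ => (mem_Lsafe_of_eq_some hβ).2 (.inr (hj α hα))⟩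
  refine ⟨none, fun α hα β hβ => (mem_Lsafe_of_eq_none hβ).2 ?_⟩
  have no_visible_pair {j m} (hm : m < 2 ^ n) : ¬ BadPairAt (fun k => α (k + 1)) j m :=
    fun hbad => hforced ⟨j, fun α' hα' => ⟨m, hbad.congr fun i hi =>
      pre_eq_pre_iff.1 (hα.trans hα'.symm) (i + 1) (by omega)⟩⟩
  obtain ⟨k, hk, hhash⟩ : ∃ k < 2 ^ n, α (k + 1) = none := by
    by_contra! hfree
    obtain ⟨j, m, hm, hbad⟩ := exists_badPairAt_of_ne_none (a := fun k => α (k + 1))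
      (by simpa using hfree)
    exact no_visible_pair (by simpa using hm) hbad
  rintro ⟨m, hbad⟩
  obtain hmk | hkm := lt_or_ge m k
  exacts [no_visible_pair (hmk.trans hk) hbad, hbad.2.2 k hkm hhash]

theorem winsI_Lsafe (hd : IsDelay f) (hf : f 0 ≤ 2 ^ n) : WinsI f (Lsafe n) := by
  have prefix_eq (c c' : Option (Fin n)) :
      pre (rulerWord (f 0) c) (f 0) = pre (rulerWord (f 0) c') (f 0) :=
    pre_eq_pre_iff.2 fun i hi => by simp [rulerWord, hi]
  refine winsI_of_first_block hd (rulerWord (f 0) none) fun b => ?_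
  cases b with
  | none =>
    refine ⟨rulerWord (f 0) (some ⊤), prefix_eq _ _, fun β hβ => ?_⟩
    rw [mem_Lsafe_of_eq_none hβ, not_not]
    exact hasBadPair_rulerWord_top (hd 0)
  | some j =>
    refine ⟨rulerWord (f 0) none, rfl, fun β hβ => ?_⟩
    rw [mem_Lsafe_of_eq_some hβ, not_or]
    refine ⟨fun hfree => hfree (f 0) ?_, not_hasBadPair_rulerWord_none (hd 0) hf j⟩
    simp [rulerWord]

end DelayGameOfLsafe

theorem stmt5_general :
    ∃ c : ℕ, ∀ n : ℕ, 0 < n →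
      (∃ (Q : Type) (_ : Fintype Q) (M : NA Q (Option (Fin n) × Option (Fin n))),
          M.Deterministic ∧ Fintype.card Q ≤ c * n ∧ M.Lforall = Lsafe n) ∧
      ∀ f : ℕ → ℕ, IsDelay f →
        (2 ^ n < f 0 → WinsO f (Lsafe n)) ∧ (f 0 ≤ 2 ^ n → WinsI f (Lsafe n)) := by
  refine ⟨9, fun n hn => ?_⟩
  have : NeZero n := ⟨hn.ne'⟩
  have hcard : Fintype.card (Option (Option (Fin n) × Phase)) = 4 * n + 5 := by
    simp only [Fintype.card_option, Fintype.card_prod, Fintype.card_fin, Phase.card_eq_four]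
    ring
  exact ⟨⟨_, inferInstance, NA.ofDFA (safeDFA (Fin n)), NA.deterministic_ofDFA _,
      by omega, Lforall_ofDFA_safeDFA n⟩,
    fun f hf => ⟨winsO_Lsafe, winsI_Lsafe hf⟩⟩

/-- the languages `L'_n` are recognized by deterministic safety
automata of size `O(n)`, Player O wins `Γ_f(L'_n)` for every constant delay
function with `f(0) > 2^n`, and Player I wins `Γ_f(L'_n)` for every delay
function with `f(0) ≤ 2^n`. -/
theorem stmt5 :
    ∃ c : ℕ, ∀ n : ℕ, 1 < n →
      (∃ (Q : Type) (_ : Fintype Q) (M : NA Q (Option (Fin n) × Option (Fin n))),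
          M.Deterministic ∧ Fintype.card Q ≤ c * n ∧ M.Lforall = Lsafe n) ∧
      (∀ f : ℕ → ℕ, IsDelay f → IsConstant f → 2 ^ n < f 0 → WinsO f (Lsafe n)) ∧
      (∀ f : ℕ → ℕ, IsDelay f → f 0 ≤ 2 ^ n → WinsI f (Lsafe n)) := by
  obtain ⟨c, h⟩ := stmt5_general
  exact ⟨c, fun n hn => let ⟨hA, hgame⟩ := h n (by omega)
    ⟨hA, fun f hf _ => (hgame f hf).1, fun f hf => (hgame f hf).2⟩⟩

end DelayGames
end

section
/- Let A be a deterministic parity automaton over Σ_I × Σ_O. Player O wins the delay game Γ_f(L_p(A)) for some delay function f if and only if Player O wins the delay-free abstract game G(A). -/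
namespace DelayGames

namespace DPA

/-- The type of (representations of) partial functions used in the abstract
game `G(A)`. -/
abbrev RFun (Q : Type*) : Type _ := (Q × ℕ) → Option (Set (Q × ℕ))

variable {Q I O : Type*} (M : DPA Q (I × O))

/-- The moves of Player I in the play `(r, q)` of `G(A)` are legal: all picked
functions are in `𝔉`, the first one has domain `{q_I^𝒞}`, and each later one
has domain `r_{i}(q_{i})` for the preceding moves. -/
def GLegalI (r : ℕ → RFun Q) (q : ℕ → Q × ℕ) : Prop :=
  (∀ i, r i ∈ M.Frak) ∧ rdom (r 0) = {M.initC} ∧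
    ∀ i, rdom (r (i + 1)) = (r i (q i)).getD ∅

/-- The play `(r, q)` is consistent with the strategy `σ` of Player O in
`G(A)`. -/
def GConsistentO (σ : List (RFun Q × (Q × ℕ)) → RFun Q → Q × ℕ)
    (r : ℕ → RFun Q) (q : ℕ → Q × ℕ) : Prop :=
  ∀ i, q i = σ ((List.range i).map fun j => (r j, q j)) (r i)

/-- Player O wins the abstract game `G(A)`: she has a strategy that always
picks states in the domain of the function just picked by Player I, such that
in every consistent play against legal moves of Player I the maximal color
occurring infinitely often among her picked states is even. -/
def GWinsO : Prop :=
  ∃ σ : List (RFun Q × (Q × ℕ)) → RFun Q → Q × ℕ,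
    (∀ h r', r' ∈ M.Frak → σ h r' ∈ rdom r') ∧
    ∀ r q, M.GLegalI r q → GConsistentO σ r q → MaxEvenInf fun i => (q i).2

end DPA

/-! ### Prefixes and factors of ω-words -/

section Words

variable {A B : Type*}

lemma pre_congr {x y : ℕ → A} {k : ℕ} (h : ∀ n < k, x n = y n) : pre x k = pre y k :=
  List.map_congr_left fun n hn => h n (List.mem_range.1 hn)

/-- The factor of an ω-word between the positions `a` (included) and `b` (excluded). -/
def factor (x : ℕ → A) (a b : ℕ) : List A := (List.Ico a b).map x

@[simp] lemma length_factor (x : ℕ → A) (a b : ℕ) : (factor x a b).length = b - a := by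
  simp [factor]

@[simp] lemma getElem_factor (x : ℕ → A) {a b j : ℕ} (h : j < (factor x a b).length) :
    (factor x a b)[j] = x (a + j) := by
  simp [factor, List.Ico]

lemma factor_self (x : ℕ → A) (a : ℕ) : factor x a a = [] := by
  simp [factor]

lemma factor_succ (x : ℕ → A) {a b : ℕ} (h : a ≤ b) :
    factor x a (b + 1) = factor x a b ++ [x b] := by
  simp [factor, List.Ico.succ_top h]

lemma pre_append_factor (x : ℕ → A) {a b : ℕ} (h : a ≤ b) : pre x a ++ factor x a b = pre x b := by
  simp only [pre, factor, ← List.Ico.zero_bot, ← List.map_append,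
    List.Ico.append_consecutive (Nat.zero_le a) h]

lemma factor_congr {x y : ℕ → A} {a b : ℕ} (h : ∀ n < b, x n = y n) :
    factor x a b = factor y a b :=
  List.map_congr_left fun n hn => h n (List.Ico.mem.1 hn).2

lemma factor_prodMk (x : ℕ → A) (y : ℕ → B) (a b : ℕ) :
    factor (fun n => (x n, y n)) a b = (factor x a b).zip (factor y a b) :=
  List.zip_map'.symm

lemma factor_getD_div_mod {d : ℕ} {u : ℕ → List A} (hu : ∀ k, (u k).length = d) (e : A) (k : ℕ) :
    factor (fun n => (u (n / d)).getD (n % d) e) (k * d) ((k + 1) * d) = u k := by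
  refine List.ext_getElem (by simp [hu, Nat.succ_mul]) fun j _ hj => ?_
  have hjd : j < d := hu k ▸ hj
  have hdiv : (k * d + j) / d = k := Nat.div_eq_of_lt_le (by lia) (by lia)
  have hmod : (k * d + j) % d = j := by rw [Nat.mul_add_mod', Nat.mod_eq_of_lt hjd]
  simp only [getElem_factor, hdiv, hmod, List.getD_eq_getElem _ _ hj]

/-- The ω-word extending a finite word by an arbitrary letter. It turns operations on ω-words
into operations on finite words. -/
noncomputable def padded [Nonempty A] (w : List A) : ℕ → A :=
  fun n => w.getD n (Classical.arbitrary A)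

lemma padded_pre [Nonempty A] (x : ℕ → A) {n k : ℕ} (h : n < k) : padded (pre x k) n = x n := by
  simp [padded, pre, h]

/-- The limit of finite words `P 0, P 1, P 2, …`, each one a proper prefix of the next. -/
noncomputable def limitWord [Nonempty A] (P : ℕ → List A) : ℕ → A := fun n => padded (P (n + 1)) n

lemma pre_limitWord [Nonempty A] {P : ℕ → List A} (hP : ∀ i, P i <+: P (i + 1))
    (hlen : StrictMono fun i => (P i).length) (i : ℕ) : pre (limitWord P) (P i).length = P i := by
  have hmono : ∀ {i j}, i ≤ j → P i <+: P j := fun hij =>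
    Nat.le_induction (List.prefix_refl _) (fun j _ h => h.trans (hP j)) _ hij
  refine List.ext_getElem (by simp [pre]) fun n _ hn => ?_
  have hn' : n < (P (n + 1)).length := (Nat.lt_succ_self n).trans_le (hlen.le_apply (x := n + 1))
  have heq : (P (n + 1))[n] = (P i)[n] := by
    rcases le_total i (n + 1) with h | h
    · exact ((hmono h).getElem hn).symm
    · exact (hmono h).getElem hn'
  simp [pre, limitWord, padded, hn', heq]

end Words

/-! ### Operators with bounded lookahead -/

section Causal

variable {A B : Type*}

/-- An operator on ω-words is causal with lookahead `b` if the `n`-th letter of its value only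
depends on the first `b n` letters of its argument. Such operators are the strategies of a player
who has seen `b n` letters before answering with the `n`-th one. -/
def IsCausal (b : ℕ → ℕ) (F : (ℕ → A) → ℕ → B) : Prop :=
  ∀ ⦃x y : ℕ → A⦄ ⦃n : ℕ⦄, (∀ j < b n, x j = y j) → F x n = F y n

lemma IsCausal.apply_padded [Nonempty A] {b : ℕ → ℕ} {F : (ℕ → A) → ℕ → B} (hF : IsCausal b F)
    (x : ℕ → A) (n : ℕ) : F (padded (pre x (b n))) n = F x n :=
  hF fun _ hj => padded_pre x hj

end Causal

section DelayGame

variable {I O : Type*}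

lemma flatten_eq_pre {f : ℕ → ℕ} {u : ℕ → List I} {α : ℕ → I} (hu : ValidBlocks f u)
    (hα : IsCat u α) (i : ℕ) :
    ((List.range i).map u).flatten = pre α (∑ j ∈ Finset.range i, f j) := by
  have hlen : ((List.range i).map u).flatten.length = ∑ j ∈ Finset.range i, f j := by
    induction i with
    | zero => rfl
    | succ i ih => simpa [List.range_succ, Finset.sum_range_succ, hu i] using ih
  rw [hα i, hlen, pre]

lemma exists_validBlocks_isCat (f : ℕ → ℕ) (α : ℕ → I) : ∃ u, ValidBlocks f u ∧ IsCat u α := by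
  let s : ℕ → ℕ := fun i => ∑ j ∈ Finset.range i, f j
  let u : ℕ → List I := fun i => factor α (s i) (s (i + 1))
  have hs : ∀ i, s (i + 1) = s i + f i := fun i => Finset.sum_range_succ f i
  have hcat : ∀ i, ((List.range i).map u).flatten = pre α (s i) := fun i => by
    induction i with
    | zero => rfl
    | succ i ih =>
      rw [List.range_succ, List.map_append, List.flatten_append, ih, List.map_singleton,
        List.flatten_singleton, pre_append_factor α (by simp [hs])]
  refine ⟨u, fun i => by simp [u, hs], fun i => ?_⟩
  rw [hcat]
  simp [pre]

lemma strictMono_sum_range_succ {f : ℕ → ℕ} (hf : IsDelay f) :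
    StrictMono fun n => ∑ j ∈ Finset.range (n + 1), f j :=
  strictMono_nat_of_lt_succ fun n => by
    rw [Finset.sum_range_succ f (n + 1)]
    exact Nat.lt_add_of_pos_right (hf (n + 1))

theorem winsO_iff_exists_isCausal [Nonempty I] {f : ℕ → ℕ} (hf : IsDelay f)
    {L : Set (ℕ → I × O)} :
    WinsO f L ↔ ∃ β : (ℕ → I) → ℕ → O,
      IsCausal (fun n => ∑ j ∈ Finset.range (n + 1), f j) β ∧ ∀ α, (fun n => (α n, β α n)) ∈ L := by
  constructor
  · rintro ⟨τ, hτ⟩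
    refine ⟨fun α n => τ (pre α (∑ j ∈ Finset.range (n + 1), f j)),
      fun α α' n h => congrArg τ (pre_congr h), fun α => ?_⟩
    obtain ⟨u, hu, hα⟩ := exists_validBlocks_isCat f α
    exact hτ u _ α hu (fun i => congrArg τ (flatten_eq_pre hu hα (i + 1)).symm) hα
  · rintro ⟨β, hβ, hL⟩
    -- The round is recovered from the number of letters seen so far.
    let round := Function.invFun fun n => ∑ j ∈ Finset.range (n + 1), f j
    have hround : ∀ n, round (∑ j ∈ Finset.range (n + 1), f j) = n :=
      Function.leftInverse_invFun (strictMono_sum_range_succ hf).injective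
    refine ⟨fun w => β (padded w) (round w.length), fun u v α hu hv hα => ?_⟩
    have hvβ : v = β α := funext fun n => by
      rw [hv n, flatten_eq_pre hu hα]
      simpa [pre, hround] using hβ.apply_padded α n
    exact hvβ ▸ hL α

end DelayGame

/-! ### The parity condition -/

section Parity

open Filter

lemma isGreatest_limsup {c : ℕ → ℕ} (hc : BddAbove (Set.range c)) :
    IsGreatest {k | {n | c n = k}.Infinite} (limsup c atTop) := by
  have hbdd : IsBoundedUnder (· ≤ ·) atTop c := hc.isBoundedUnder_of_range
  have hle : ∀ᶠ n in atTop, c n ≤ limsup c atTop :=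
    (eventually_lt_of_limsup_lt (Nat.lt_succ_self _) hbdd).mono fun _ => Nat.le_of_lt_succ
  refine ⟨Nat.frequently_atTop_iff_infinite.1 fun hne => ?_, fun k hk => ?_⟩
  · have hlt : ∀ᶠ n in atTop, c n < limsup c atTop := by
      filter_upwards [hle, hne] with n h h' using lt_of_le_of_ne h h'
    obtain ⟨n, hn⟩ := hlt.exists
    have hpred : limsup c atTop ≤ limsup c atTop - 1 :=
      limsup_le_of_le (h := hlt.mono fun n h => Nat.le_sub_one_of_lt h)
    lia
  · obtain ⟨n, hn, hnle⟩ := ((Nat.frequently_atTop_iff_infinite.2 hk).and_eventually hle).exists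
    exact hn ▸ hnle

lemma maxEvenInf_iff_even_limsup {c : ℕ → ℕ} (hc : BddAbove (Set.range c)) :
    MaxEvenInf c ↔ Even (limsup c atTop) :=
  ⟨fun ⟨_, hk, hinf, hmax⟩ => (isGreatest_limsup hc).unique ⟨hinf, hmax⟩ ▸ hk,
    fun h => ⟨_, h, isGreatest_limsup hc⟩⟩

lemma limsup_sup_Icc {c c' s : ℕ → ℕ} (hs : StrictMono s)
    (h : ∀ k, c' (k + 1) = (Finset.Icc (s k) (s (k + 1))).sup c) :
    limsup c' atTop = limsup c atTop := by
  simp only [limsup_eq]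
  congr! 3 with a
  rw [eventually_atTop, eventually_atTop]
  constructor
  · rintro ⟨m, hm⟩
    refine ⟨s m, fun n hn => ?_⟩
    obtain ⟨k, hk, hnk⟩ : ∃ k, s k ≤ n ∧ n < s (k + 1) := by
      have hn0 : n ∈ Set.Ici (s ⊥) := (hs.monotone bot_le).trans hn
      rw [← iUnion_Ico_map_succ_eq_Ici (fun _ => hs.monotone bot_le)
        (not_bddAbove_of_tendsto_atTop hs.tendsto_atTop)] at hn0
      simpa only [Set.mem_iUnion, Set.mem_Ico, Nat.succ_eq_succ] using hn0
    have hmk : m < k + 1 := hs.lt_iff_lt.1 (hn.trans_lt hnk)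
    calc c n ≤ (Finset.Icc (s k) (s (k + 1))).sup c :=
          Finset.le_sup (Finset.mem_Icc.2 ⟨hk, hnk.le⟩)
      _ = c' (k + 1) := (h k).symm
      _ ≤ a := hm (k + 1) hmk.le
  · rintro ⟨m, hm⟩
    refine ⟨m + 1, fun n hn => ?_⟩
    obtain ⟨k, rfl⟩ : ∃ k, n = k + 1 := ⟨n - 1, by lia⟩
    rw [h]
    refine Finset.sup_le fun l hl => hm l ?_
    calc m ≤ k := Nat.le_of_succ_le_succ hn
      _ ≤ s k := hs.le_apply
      _ ≤ l := (Finset.mem_Icc.1 hl).1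

end Parity

namespace DPA

variable {Q I O : Type*} (M : DPA Q (I × O))

/-! ### The color-tracking automaton -/

/-- The state `(q, Ω(q))` of `𝒞`, from which it starts to process a new block. -/
def resetColor (q : Q) : Q × ℕ := (q, M.color q)

lemma foldl_transC_factor (x : ℕ → I × O) {a b : ℕ} (hab : a ≤ b) :
    (factor x a b).foldl M.transC (M.resetColor (M.run x a)) =
      (M.run x b, (Finset.Icc a b).sup fun m => M.color (M.run x m)) := by
  induction b, hab using Nat.le_induction with
  | base => simp [factor_self, resetColor]
  | succ b hab ih =>
    rw [factor_succ x hab, List.foldl_append, ih,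
      ← Finset.insert_Icc_right_eq_Icc_add_one (hab.trans b.le_succ), Finset.sup_insert, sup_comm]
    rfl

/-- The state of `𝒞` after the first `k` blocks of `x`, where the `k`-th block is the factor
between the positions `s k` and `s (k + 1)` and the color is reset at the start of each block. -/
def blockState (x : ℕ → I × O) (s : ℕ → ℕ) : ℕ → Q × ℕ
  | 0 => M.initC
  | k + 1 => (factor x (s k) (s (k + 1))).foldl M.transC (M.resetColor (blockState x s k).1)

lemma blockState_congr {x y : ℕ → I × O} {s t : ℕ → ℕ} {k : ℕ} (hs : Monotone s)
    (hst : ∀ j ≤ k, s j = t j) (hxy : ∀ n < s k, x n = y n) :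
    M.blockState x s k = M.blockState y t k := by
  induction k with
  | zero => rfl
  | succ k ih =>
    rw [blockState, blockState, ih (fun j hj => hst j (hj.trans k.le_succ))
        fun n hn => hxy n (hn.trans_le (hs k.le_succ)),
      ← hst k k.le_succ, ← hst (k + 1) le_rfl, factor_congr hxy]

section Blocks

variable {x : ℕ → I × O} {s : ℕ → ℕ} (hs0 : s 0 = 0) (hs : StrictMono s)
include hs0 hs

lemma fst_blockState (k : ℕ) : (M.blockState x s k).1 = M.run x (s k) := by
  induction k with
  | zero => rw [hs0]; rfl
  | succ k ih => rw [blockState, ih, M.foldl_transC_factor x (hs.monotone k.le_succ)]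

lemma snd_blockState_succ (k : ℕ) : (M.blockState x s (k + 1)).2 =
    (Finset.Icc (s k) (s (k + 1))).sup fun m => M.color (M.run x m) := by
  rw [blockState, M.fst_blockState hs0 hs, M.foldl_transC_factor x (hs.monotone k.le_succ)]

lemma maxEvenInf_blockState_iff [Finite Q] :
    MaxEvenInf (fun k => (M.blockState x s k).2) ↔ x ∈ M.Lparity := by
  obtain ⟨N, hN⟩ := (Set.finite_range M.color).bddAbove
  have hcolor : ∀ q, M.color q ≤ N := fun q => hN ⟨q, rfl⟩
  have hrun : BddAbove (Set.range fun n => M.color (M.run x n)) :=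
    ⟨N, Set.forall_mem_range.2 fun n => hcolor _⟩
  have hblock : BddAbove (Set.range fun k => (M.blockState x s k).2) := by
    refine ⟨N, Set.forall_mem_range.2 fun k => ?_⟩
    cases k with
    | zero => exact hcolor M.init
    | succ k =>
      rw [M.snd_blockState_succ hs0 hs]
      exact Finset.sup_le fun m _ => hcolor _
  rw [maxEvenInf_iff_even_limsup hblock, limsup_sup_Icc hs (M.snd_blockState_succ hs0 hs),
    ← maxEvenInf_iff_even_limsup hrun, Lparity, Set.mem_ofPred_eq]

end Blocks

/-! ### The powerset automaton -/

lemma mem_transP {S : Set (Q × ℕ)} {a : I} {q : Q × ℕ} :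
    q ∈ M.transP S a ↔ ∃ s ∈ S, ∃ b : O, M.transC s (a, b) = q := by
  simp only [transP, Set.mem_iUnion, Set.mem_singleton_iff, exists_prop, eq_comm]

lemma mem_transPStar {S : Set (Q × ℕ)} {w : List I} {q : Q × ℕ} :
    q ∈ M.transPStar S w ↔
      ∃ s ∈ S, ∃ v : List O, v.length = w.length ∧ (w.zip v).foldl M.transC s = q := by
  induction w generalizing S with
  | nil => simp [transPStar]
  | cons a w ih =>
    rw [transPStar, List.foldl_cons, ← transPStar, ih]
    constructor
    · rintro ⟨_, ht, v, hv, rfl⟩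
      obtain ⟨s, hs, b, rfl⟩ := M.mem_transP.1 ht
      exact ⟨s, hs, b :: v, by simp [hv], rfl⟩
    · rintro ⟨s, hs, _ | ⟨b, v⟩, hv, rfl⟩
      · simp at hv
      · exact ⟨_, M.mem_transP.2 ⟨s, hs, b, rfl⟩, v, by simpa using hv, rfl⟩

lemma transPStar_nonempty [Nonempty O] {S : Set (Q × ℕ)} (hS : S.Nonempty) (w : List I) :
    (M.transPStar S w).Nonempty :=
  let ⟨s, hs⟩ := hS
  let ⟨b⟩ := ‹Nonempty O›
  ⟨_, M.mem_transPStar.2 ⟨s, hs, List.replicate w.length b, List.length_replicate, rfl⟩⟩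

lemma transPStar_subset_QCvalid {S : Set (Q × ℕ)} (hS : S ⊆ M.QCvalid) (w : List I) :
    M.transPStar S w ⊆ M.QCvalid := by
  induction w generalizing S with
  | nil => exact hS
  | cons a _ ih =>
    refine ih fun q hq => ?_
    obtain ⟨s, hs, b, rfl⟩ := M.mem_transP.1 hq
    exact max_rec' (· ∈ Set.range M.color) (hS hs) ⟨_, rfl⟩

lemma blockState_succ_mem (α : ℕ → I) (β : ℕ → O) (s : ℕ → ℕ) (k : ℕ) :
    M.blockState (fun n => (α n, β n)) s (k + 1) ∈
      M.transPStar {M.resetColor (M.blockState (fun n => (α n, β n)) s k).1}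
        (factor α (s k) (s (k + 1))) :=
  M.mem_transPStar.2
    ⟨_, rfl, factor β (s k) (s (k + 1)), by simp, by rw [← factor_prodMk, blockState]⟩

/-! ### Witnesses -/

@[simp] lemma rdom_rOf (D : Set (Q × ℕ)) (w : List I) : rdom (M.rOf D w) = D := by
  ext q
  by_cases h : q ∈ D <;> simp [rdom, rOf, h]

lemma mem_witnessSet_rOf (D : Set (Q × ℕ)) (w : List I) : w ∈ M.WitnessSet (M.rOf D w) := by
  rw [WitnessSet, Set.mem_ofPred_eq, rdom_rOf]

lemma getD_of_mem_witnessSet {r : RFun Q} {w : List I} (hw : w ∈ M.WitnessSet r) {q : Q × ℕ}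
    (hq : q ∈ rdom r) : (r q).getD ∅ = M.transPStar {M.resetColor q.1} w := by
  have hrq : r q = M.rOf (rdom r) w q := congrFun hw q
  simp [hrq, rOf, hq, resetColor]

lemma exists_lt_length_mem_witnessSet [Finite I] {r : RFun Q} (hr : r ∈ M.Frak) (n : ℕ) :
    ∃ w ∈ M.WitnessSet r, n < w.length := by
  by_contra! h
  exact hr.2 ((List.finite_length_le I n).subset h)

/-- The behavior of a word, which determines the functions `r_w^D` for all `D`. -/
def profile (w : List I) (q : Q) : Set (Q × ℕ) := M.transPStar {M.resetColor q} w

lemma rOf_congr {w w' : List I} (h : M.profile w = M.profile w') (D : Set (Q × ℕ)) :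
    M.rOf D w = M.rOf D w' := by
  funext q
  have hq : M.profile w q.1 = M.profile w' q.1 := congrFun h q.1
  simp only [profile, resetColor] at hq
  simp only [rOf, hq]

lemma finite_range_profile [Finite Q] : (Set.range M.profile).Finite := by
  have hvalid : M.QCvalid.Finite :=
    (Set.finite_univ.prod (Set.finite_range M.color)).subset fun _ hq => ⟨trivial, hq⟩
  refine (Set.Finite.pi' fun _ : Q => hvalid.powerset).subset ?_
  rintro _ ⟨w, rfl⟩ q
  exact M.transPStar_subset_QCvalid (Set.singleton_subset_iff.2 ⟨q, rfl⟩) w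

/-- Having the same profile is an equivalence relation of finite index, so only finitely many words
lie in finite classes. -/
lemma exists_forall_lt_length_rOf_mem_frak [Finite Q] : ∃ N, ∀ w : List I, N < w.length →
    ∀ D : Set (Q × ℕ), D.Nonempty → M.rOf D w ∈ M.Frak := by
  have hfinite : {w : List I | (M.profile ⁻¹' {M.profile w}).Finite}.Finite :=
    .of_finite_fibers M.profile (M.finite_range_profile.subset (Set.image_subset_range _ _)) <|
      Set.forall_mem_image.2 fun _ hw => hw.subset Set.inter_subset_right
  obtain ⟨N, hN⟩ := (hfinite.image List.length).bddAbove
  refine ⟨N, fun w hw D hD => ⟨by rwa [rdom_rOf], ?_⟩⟩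
  have hinf : (M.profile ⁻¹' {M.profile w}).Infinite := fun hfin =>
    (hN ⟨w, hfin, rfl⟩).not_gt hw
  refine hinf.mono fun w' hw' => ?_
  rw [WitnessSet, Set.mem_ofPred_eq, rdom_rOf, M.rOf_congr hw' D]

end DPA

namespace DPA

/-! ### From the abstract game to a delay game -/

section ToDelayGame

variable {Q I O : Type*} (M : DPA Q (I × O)) (σ : List (RFun Q × (Q × ℕ)) → RFun Q → Q × ℕ)

/-- The domain that Player I's next function must have after a finite play of `G(A)`. -/
def nextDomain (h : List (RFun Q × (Q × ℕ))) : Set (Q × ℕ) :=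
  h.getLast?.elim {M.initC} fun p => (p.1 p.2).getD ∅

/-- The first `k` rounds of the play of `G(A)` in which Player O uses `σ` and Player I picks in
round `i` the function with the required domain that is induced by the word `w i`. -/
noncomputable def history (w : ℕ → List I) : ℕ → List (RFun Q × (Q × ℕ))
  | 0 => []
  | k + 1 =>
    let r := M.rOf (M.nextDomain (history w k)) (w k)
    history w k ++ [(r, σ (history w k) r)]

/-- Player I's move in round `k` of the play described by `history`. -/
noncomputable def moveI (w : ℕ → List I) (k : ℕ) : RFun Q :=
  M.rOf (M.nextDomain (M.history σ w k)) (w k)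

/-- Player O's move in round `k` of the play described by `history`. -/
noncomputable def moveO (w : ℕ → List I) (k : ℕ) : Q × ℕ :=
  σ (M.history σ w k) (M.moveI σ w k)

lemma history_congr {w w' : ℕ → List I} {k : ℕ} (h : ∀ j < k, w j = w' j) :
    M.history σ w k = M.history σ w' k := by
  induction k with
  | zero => rfl
  | succ k ih =>
    simp only [history, ih fun j hj => h j (hj.trans k.lt_succ_self), h k k.lt_succ_self]

lemma isCausal_moveO : IsCausal (· + 1) (M.moveO σ) := fun w w' k h => by
  rw [moveO, moveO, moveI, moveI, h k k.lt_succ_self,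
    M.history_congr σ fun j hj => h j (hj.trans k.lt_succ_self)]

lemma history_eq_map (w : ℕ → List I) (k : ℕ) :
    M.history σ w k = (List.range k).map fun j => (M.moveI σ w j, M.moveO σ w j) := by
  induction k with
  | zero => rfl
  | succ k ih => rw [List.range_succ, List.map_append, ← ih]; rfl

lemma gConsistentO_move (w : ℕ → List I) : GConsistentO σ (M.moveI σ w) (M.moveO σ w) :=
  fun k => by rw [← M.history_eq_map, moveO]

lemma rdom_moveI_zero (w : ℕ → List I) : rdom (M.moveI σ w 0) = {M.initC} :=
  M.rdom_rOf _ _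

lemma rdom_moveI_succ (w : ℕ → List I) (k : ℕ) :
    rdom (M.moveI σ w (k + 1)) = (M.moveI σ w k (M.moveO σ w k)).getD ∅ := by
  rw [moveI, rdom_rOf, nextDomain, history, List.getLast?_concat]
  rfl

lemma rdom_moveI_succ_of_mem {w : ℕ → List I} {k : ℕ} (h : M.moveO σ w k ∈ rdom (M.moveI σ w k)) :
    rdom (M.moveI σ w (k + 1)) = M.transPStar {M.resetColor (M.moveO σ w k).1} (w k) := by
  have hw : w k ∈ M.WitnessSet (M.moveI σ w k) := M.mem_witnessSet_rOf _ (w k)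
  rw [rdom_moveI_succ, M.getD_of_mem_witnessSet hw h]

section Legal

variable {σ} {w : ℕ → List I} (hσ : ∀ h r, r ∈ M.Frak → σ h r ∈ rdom r)
  (hw : ∀ k, ∀ D : Set (Q × ℕ), D.Nonempty → M.rOf D (w k) ∈ M.Frak)
include hσ hw

lemma moveI_mem_frak [Nonempty O] (k : ℕ) : M.moveI σ w k ∈ M.Frak := by
  induction k with
  | zero => exact hw 0 _ (Set.singleton_nonempty M.initC)
  | succ k ih =>
    refine hw (k + 1) _ ?_
    rw [← M.rdom_rOf (M.nextDomain _) (w (k + 1)), ← moveI,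
      M.rdom_moveI_succ_of_mem σ (hσ _ _ ih)]
    exact M.transPStar_nonempty (Set.singleton_nonempty _) (w k)

lemma moveO_mem_rdom [Nonempty O] (k : ℕ) : M.moveO σ w k ∈ rdom (M.moveI σ w k) :=
  hσ _ _ (M.moveI_mem_frak hσ hw k)

lemma gLegalI_move [Nonempty O] : M.GLegalI (M.moveI σ w) (M.moveO σ w) :=
  ⟨M.moveI_mem_frak hσ hw, M.rdom_moveI_zero σ w, M.rdom_moveI_succ σ w⟩

lemma moveO_zero [Nonempty O] : M.moveO σ w 0 = M.initC := by
  simpa only [rdom_moveI_zero, Set.mem_singleton_iff] using M.moveO_mem_rdom hσ hw 0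

lemma moveO_succ_mem_transPStar [Nonempty O] (k : ℕ) :
    M.moveO σ w (k + 1) ∈ M.transPStar {M.resetColor (M.moveO σ w k).1} (w k) := by
  rw [← M.rdom_moveI_succ_of_mem σ (M.moveO_mem_rdom hσ hw k)]
  exact M.moveO_mem_rdom hσ hw (k + 1)

end Legal

open scoped Classical in
/-- Outputs that lead `𝒞` on the input word `w` from `q` to `q'`, if there are any. -/
noncomputable def steer [Nonempty O] (q q' : Q × ℕ) (w : List I) : List O :=
  if h : ∃ v : List O, v.length = w.length ∧ (w.zip v).foldl M.transC q = q' then h.choose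
  else List.replicate w.length (Classical.arbitrary O)

lemma length_steer [Nonempty O] (q q' : Q × ℕ) (w : List I) :
    (M.steer q q' w).length = w.length := by
  rw [steer]
  split_ifs with h
  · exact h.choose_spec.1
  · exact List.length_replicate

lemma foldl_transC_zip_steer [Nonempty O] {q q' : Q × ℕ} {w : List I}
    (h : q' ∈ M.transPStar {q} w) : (w.zip (M.steer q q' w)).foldl M.transC q = q' := by
  have hex : ∃ v : List O, v.length = w.length ∧ (w.zip v).foldl M.transC q = q' := by
    simpa only [Set.mem_singleton_iff, exists_eq_left] using M.mem_transPStar.1 h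
  rw [steer, dif_pos hex]
  exact hex.choose_spec.2

/-- The decomposition of an ω-word into blocks of length `d`. -/
def blocks (d : ℕ) (α : ℕ → I) (k : ℕ) : List I := factor α (k * d) ((k + 1) * d)

/-- Player O's outputs on the `k`-th block of length `d` of the input `α`: they steer `𝒞` from
the state she picks in round `k` of the play `history` to the one she picks in round `k + 1`. -/
noncomputable def blockReply [Nonempty O] (d : ℕ) (α : ℕ → I) (k : ℕ) : List O :=
  M.steer (M.resetColor (M.moveO σ (blocks d α) k).1) (M.moveO σ (blocks d α) (k + 1))
    (blocks d α k)

/-- The concatenation of the words `blockReply`. -/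
noncomputable def reply [Nonempty O] (d : ℕ) (α : ℕ → I) (n : ℕ) : O :=
  (M.blockReply σ d α (n / d)).getD (n % d) (Classical.arbitrary O)

lemma factor_reply [Nonempty O] (d : ℕ) (α : ℕ → I) (k : ℕ) :
    factor (M.reply σ d α) (k * d) ((k + 1) * d) = M.blockReply σ d α k :=
  factor_getD_div_mod (fun k => by simp [blockReply, length_steer, blocks, Nat.succ_mul]) _ k

/-- The reply within block `n / d` requires this block and the next one. -/
lemma isCausal_reply [Nonempty O] (d : ℕ) : IsCausal (2 * d + ·) (M.reply σ d) :=
  fun α α' n h => by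
    have hblocks : ∀ k < n / d + 1 + 1, blocks d α k = blocks d α' k := fun k hk =>
      factor_congr fun j hj => h j <| calc
        j < (k + 1) * d := hj
        _ ≤ (n / d + 2) * d := Nat.mul_le_mul_right d hk
        _ = 2 * d + n / d * d := by ring
        _ ≤ 2 * d + n := Nat.add_le_add_left (Nat.div_mul_le_self n d) _
    rw [reply, reply, blockReply, blockReply, M.isCausal_moveO σ hblocks,
      M.isCausal_moveO σ fun k hk => hblocks k (hk.trans (Nat.lt_succ_self _)),
      hblocks (n / d) (by lia)]

lemma moveO_eq_blockState [Nonempty O] {σ} (hσ : ∀ h r, r ∈ M.Frak → σ h r ∈ rdom r)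
    {d : ℕ} {α : ℕ → I}
    (hα : ∀ k, ∀ D : Set (Q × ℕ), D.Nonempty → M.rOf D (blocks d α k) ∈ M.Frak) (k : ℕ) :
    M.moveO σ (blocks d α) k = M.blockState (fun n => (α n, M.reply σ d α n)) (· * d) k := by
  induction k with
  | zero => exact M.moveO_zero hσ hα
  | succ k ih =>
    rw [blockState, factor_prodMk, factor_reply, ← ih]
    exact (M.foldl_transC_zip_steer (M.moveO_succ_mem_transPStar hσ hα k)).symm

/-- The delay function of a game in which Player I starts with `n` letters and then picks one
letter per round. -/
def initialDelay (n i : ℕ) : ℕ := if i = 0 then n else 1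

lemma isDelay_initialDelay {n : ℕ} (hn : 0 < n) : IsDelay (initialDelay n) := fun i => by
  rw [initialDelay]
  split_ifs
  exacts [hn, le_rfl]

lemma sum_range_succ_initialDelay (n i : ℕ) :
    ∑ j ∈ Finset.range (i + 1), initialDelay n j = n + i := by
  simp [Finset.sum_range_succ', initialDelay, add_comm]

theorem exists_winsO_initialDelay_of_gWinsO [Finite Q] [Nonempty I] [Nonempty O]
    (h : M.GWinsO) : ∃ n > 0, WinsO (initialDelay n) M.Lparity := by
  obtain ⟨σ, hσ, hwin⟩ := h
  obtain ⟨N, hN⟩ := M.exists_forall_lt_length_rOf_mem_frak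
  obtain ⟨d, hNd⟩ := exists_gt N
  have hd : 0 < d := N.zero_le.trans_lt hNd
  have hn : 0 < 2 * d := Nat.mul_pos two_pos hd
  refine ⟨2 * d, hn, (winsO_iff_exists_isCausal (isDelay_initialDelay hn)).2
    ⟨M.reply σ d, ?_, fun α => ?_⟩⟩
  · simpa only [sum_range_succ_initialDelay] using M.isCausal_reply σ d
  · have hα : ∀ k, ∀ D : Set (Q × ℕ), D.Nonempty → M.rOf D (blocks d α k) ∈ M.Frak :=
      fun k => hN _ (by simpa [blocks, Nat.succ_mul] using hNd)
    rw [← M.maxEvenInf_blockState_iff (s := (· * d)) (Nat.zero_mul d)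
      fun _ _ hab => Nat.mul_lt_mul_of_pos_right hab hd]
    simpa only [M.moveO_eq_blockState hσ hα] using
      hwin _ _ (M.gLegalI_move hσ hα) (M.gConsistentO_move σ _)

end ToDelayGame

/-! ### From a delay game to the abstract game -/

section ToAbstractGame

variable {Q I O : Type*} (M : DPA Q (I × O))

theorem gWinsO_of_isCausal {ρ : (ℕ → RFun Q) → ℕ → Q × ℕ} (hρ : IsCausal (· + 1) ρ)
    (hzero : ∀ r, ρ r 0 = M.initC)
    (hsucc : ∀ r, (∀ i, r i ∈ M.Frak) → ∀ i, ρ r i ∈ rdom (r i) →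
      ρ r (i + 1) ∈ (r i (ρ r i)).getD ∅)
    (hwin : ∀ r, (∀ i, r i ∈ M.Frak) → MaxEvenInf fun i => (ρ r i).2) : M.GWinsO := by
  classical
  -- Follow `ρ` as long as this is legal.
  let σ : List (RFun Q × (Q × ℕ)) → RFun Q → Q × ℕ := fun h r' =>
    let q := ρ (padded (h.map Prod.fst ++ [r'])) h.length
    if q ∈ rdom r' then q else if hne : (rdom r').Nonempty then hne.choose else M.initC
  have hσ_apply : ∀ (r : ℕ → RFun Q) (q : ℕ → Q × ℕ) i, ρ r i ∈ rdom (r i) →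
      σ ((List.range i).map fun j => (r j, q j)) (r i) = ρ r i := fun r q i hi => by
    have hpre : ((List.range i).map fun j => (r j, q j)).map Prod.fst ++ [r i] = pre r (i + 1) := by
      simp [pre, List.range_succ]
    simp only [σ, hpre, List.length_map, List.length_range, hρ.apply_padded r i, if_pos hi]
  refine ⟨σ, fun h r' hr' => ?_, ?_⟩
  · simp only [σ, dif_pos hr'.1]
    split_ifs with hq
    exacts [hq, hr'.1.choose_spec]
  · rintro r q ⟨hfrak, hdom_zero, hdom_succ⟩ hcons
    have hmem : ∀ i, ρ r i ∈ rdom (r i) := fun i => by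
      induction i with
      | zero => rw [hzero, hdom_zero]; rfl
      | succ i ih =>
        rw [hdom_succ, hcons i, hσ_apply r q i ih]
        exact hsucc r hfrak i ih
    have hq : q = ρ r := funext fun i => (hcons i).trans (hσ_apply r q i (hmem i))
    exact hq ▸ hwin r hfrak

variable [Nonempty I]

open scoped Classical in
/-- A word with more than `n` letters that is a witness of `r`, provided that there is one. -/
noncomputable def longWitness (r : RFun Q) (n : ℕ) : List I :=
  if h : ∃ w ∈ M.WitnessSet r, n < w.length then h.choose
  else List.replicate (n + 1) (Classical.arbitrary I)

lemma lt_length_longWitness (r : RFun Q) (n : ℕ) : n < (M.longWitness r n).length := by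
  rw [longWitness]
  split_ifs with h
  · exact h.choose_spec.2
  · simp

lemma longWitness_mem_witnessSet [Finite I] {r : RFun Q} (hr : r ∈ M.Frak) (n : ℕ) :
    M.longWitness r n ∈ M.WitnessSet r := by
  rw [longWitness, dif_pos (M.exists_lt_length_mem_witnessSet hr n)]
  exact (M.exists_lt_length_mem_witnessSet hr n).choose_spec.1

variable (b : ℕ → ℕ)

/-- The concatenation of witnesses of the first `i` functions in `r`, each one long enough for
Player O, given `b n` letters of lookahead for the `n`-th output, to have processed all preceding
ones. -/
noncomputable def simPrefix (r : ℕ → RFun Q) : ℕ → List I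
  | 0 => []
  | i + 1 => simPrefix r i ++ M.longWitness (r i) (b (simPrefix r i).length)

/-- The position in the simulated input at which the witness of `r i` starts. -/
noncomputable def simCut (r : ℕ → RFun Q) (i : ℕ) : ℕ := (M.simPrefix b r i).length

/-- The input of the delay game that simulates the sequence `r` of functions. -/
noncomputable def simInput (r : ℕ → RFun Q) : ℕ → I := limitWord (M.simPrefix b r)

lemma simPrefix_congr {r r' : ℕ → RFun Q} {i : ℕ} (h : ∀ j < i, r j = r' j) :
    M.simPrefix b r i = M.simPrefix b r' i := by
  induction i with
  | zero => rfl
  | succ i ih =>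
    rw [simPrefix, simPrefix, ih fun j hj => h j (hj.trans i.lt_succ_self), h i i.lt_succ_self]

lemma strictMono_simCut (r : ℕ → RFun Q) : StrictMono (M.simCut b r) :=
  strictMono_nat_of_lt_succ fun i => by
    rw [simCut, simCut, simPrefix, List.length_append]
    exact Nat.lt_add_of_pos_right ((Nat.zero_le _).trans_lt (M.lt_length_longWitness _ _))

lemma lookahead_lt_simCut_succ (r : ℕ → RFun Q) (i : ℕ) :
    b (M.simCut b r i) < M.simCut b r (i + 1) := by
  simp only [simCut, simPrefix, List.length_append]
  exact (M.lt_length_longWitness _ _).trans_le (Nat.le_add_left _ _)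

lemma pre_simInput (r : ℕ → RFun Q) (i : ℕ) :
    pre (M.simInput b r) (M.simCut b r i) = M.simPrefix b r i :=
  pre_limitWord (fun _ => List.prefix_append _ _) (M.strictMono_simCut b r) i

lemma factor_simInput (r : ℕ → RFun Q) (i : ℕ) :
    factor (M.simInput b r) (M.simCut b r i) (M.simCut b r (i + 1)) =
      M.longWitness (r i) (b (M.simCut b r i)) := by
  refine List.append_cancel_left (as := M.simPrefix b r i) ?_
  rw [← pre_simInput, pre_append_factor _ ((M.strictMono_simCut b r).monotone i.le_succ),
    pre_simInput, pre_simInput]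
  rfl

lemma simInput_congr {r r' : ℕ → RFun Q} {i : ℕ} (h : ∀ j < i, r j = r' j) :
    ∀ n < M.simCut b r i, M.simInput b r n = M.simInput b r' n := fun n hn => by
  have hpre : pre (M.simInput b r) (M.simCut b r i) = pre (M.simInput b r') (M.simCut b r i) := by
    rw [pre_simInput, simCut, M.simPrefix_congr b h, ← simCut, pre_simInput]
  rw [← padded_pre (M.simInput b r) hn, hpre, padded_pre (M.simInput b r') hn]

/-- Player O's answers in `G(A)` to the functions in `r`, when she uses the operator `β` in the
simulated delay game. -/
noncomputable def simAnswer (β : (ℕ → I) → ℕ → O) (r : ℕ → RFun Q) : ℕ → Q × ℕ :=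
  M.blockState (fun n => (M.simInput b r n, β (M.simInput b r) n)) (M.simCut b r)

variable {b} {β : (ℕ → I) → ℕ → O}

lemma isCausal_simAnswer (hb : Monotone b) (hβ : IsCausal b β) :
    IsCausal (· + 1) (M.simAnswer b β) := fun r r' i h => by
  have hinput : ∀ n < M.simCut b r (i + 1), M.simInput b r n = M.simInput b r' n :=
    M.simInput_congr b h
  refine M.blockState_congr (M.strictMono_simCut b r).monotone (fun j hj => ?_) fun n hn => ?_
  · rw [simCut, M.simPrefix_congr b fun l hl => h l (hl.trans (Nat.lt_succ_of_le hj)), ← simCut]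
  · have hlookahead : b n ≤ M.simCut b r (i + 1) :=
      (hb hn.le).trans (M.lookahead_lt_simCut_succ b r i).le
    rw [hinput n (hn.trans (M.strictMono_simCut b r i.lt_succ_self)),
      hβ fun j hj => hinput j (hj.trans_le hlookahead)]

lemma simAnswer_succ_mem [Finite I] {r : ℕ → RFun Q} {i : ℕ} (hr : r i ∈ M.Frak)
    (hi : M.simAnswer b β r i ∈ rdom (r i)) :
    M.simAnswer b β r (i + 1) ∈ (r i (M.simAnswer b β r i)).getD ∅ := by
  rw [M.getD_of_mem_witnessSet (M.longWitness_mem_witnessSet hr (b (M.simCut b r i))) hi,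
    ← factor_simInput]
  exact M.blockState_succ_mem _ _ _ i

theorem gWinsO_of_winsO [Finite Q] [Finite I] {f : ℕ → ℕ} (hf : IsDelay f)
    (h : WinsO f M.Lparity) : M.GWinsO := by
  obtain ⟨β, hβ, hL⟩ := (winsO_iff_exists_isCausal hf).1 h
  have hb := (strictMono_sum_range_succ hf).monotone
  exact M.gWinsO_of_isCausal (M.isCausal_simAnswer hb hβ) (fun _ => rfl)
    (fun r hr i => M.simAnswer_succ_mem (hr i))
    fun r _ => (M.maxEvenInf_blockState_iff rfl (M.strictMono_simCut _ r)).2 (hL _)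

end ToAbstractGame

end DPA

theorem stmt12_general {Q I O : Type*} [Finite Q] [Finite I] [Nonempty I] [Nonempty O]
    (M : DPA Q (I × O)) : (∃ f, IsDelay f ∧ WinsO f M.Lparity) ↔ M.GWinsO :=
  ⟨fun ⟨_, hf, h⟩ => M.gWinsO_of_winsO hf h, fun h =>
    let ⟨_, hn, hwin⟩ := M.exists_winsO_initialDelay_of_gWinsO h
    ⟨_, DPA.isDelay_initialDelay hn, hwin⟩⟩

/-- Player O wins the delay game `Γ_f(L_p(A))` for some delay
function `f` if and only if she wins the abstract game `G(A)`. -/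
theorem stmt12 {Q I O : Type*} [Fintype Q] [Fintype I] [Fintype O]
    [Nonempty I] [Nonempty O] (M : DPA Q (I × O)) :
    (∃ f, IsDelay f ∧ WinsO f M.Lparity) ↔ M.GWinsO :=
  stmt12_general M

end DelayGames
end
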